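/- Let s be a real number which is not an integer, and let a, z > 0 be real numbers with z ≠ 1. Then f_q(z, a q^{s}) tends to z^{−⌊s⌋}/(z − 1) as q tends to 0 from the right (q ranging over (0,1)), where ⌊s⌋ is the integer floor of s. -/

import Mathlib

open Filter Topology

/-- The q-theta function
`θ_q(x) = (x^{1/2} - x^{-1/2}) ∏_{i=1}^∞ (1 - x q^i)(1 - x⁻¹ q^i)`. -/
noncomputable def qTheta (q x : ℝ) : ℝ :=
  (Real.sqrt x - (Real.sqrt x)⁻¹) *
    ∏' i : ℕ, (1 - x * q ^ (i + 1)) * (1 - x⁻¹ * q ^ (i + 1))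

/-- `f_q(z, a) = θ_q(a z) / (θ_q(a) θ_q(z))`. -/
noncomputable def fTheta (q z a : ℝ) : ℝ :=
  qTheta q (a * z) / (qTheta q a * qTheta q z)

/-- auxiliary q-Pochhammer product -/
noncomputable def qA (q x : ℝ) : ℝ := ∏' i : ℕ, (1 + -(x * q ^ i))

lemma qA_summable {q : ℝ} (h0 : 0 < q) (h1 : q < 1) (x : ℝ) :
    Summable (fun i : ℕ => ‖-(x * q ^ i)‖) := by
  have : Summable (fun i : ℕ => x * q ^ i) :=
    (summable_geometric_of_lt_one h0.le h1).mul_left x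
  exact this.neg.norm

lemma qA_multipliable {q : ℝ} (h0 : 0 < q) (h1 : q < 1) (x : ℝ) :
    Multipliable (fun i : ℕ => (1 + -(x * q ^ i))) :=
  multipliable_one_add_of_summable (qA_summable h0 h1 x)

lemma qA_step {q : ℝ} (h0 : 0 < q) (h1 : q < 1) (x : ℝ) :
    qA q x = (1 - x) * qA q (x * q) := by
  unfold qA
  rw [tprod_eq_zero_mul']
  · simp only [pow_zero, mul_one, pow_succ']
    simp only [mul_assoc, sub_eq_add_neg]
  · have := qA_multipliable h0 h1 (x * q)
    simpa only [mul_assoc, pow_succ'] using this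

lemma qTheta_eq {q : ℝ} (h0 : 0 < q) (h1 : q < 1) {x : ℝ} (hx : 0 < x) :
    qTheta q x = -(Real.sqrt x)⁻¹ * (qA q x * qA q (x⁻¹ * q)) := by
  have hP : ∏' i : ℕ, (1 - x * q ^ (i + 1)) * (1 - x⁻¹ * q ^ (i + 1))
      = qA q (x * q) * qA q (x⁻¹ * q) := by
    unfold qA
    rw [← (qA_multipliable h0 h1 (x * q)).tprod_mul (qA_multipliable h0 h1 (x⁻¹ * q))]
    congr 1
    ext i
    ring
  have hs : 0 < Real.sqrt x := Real.sqrt_pos.2 hx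
  have hs2 : Real.sqrt x * Real.sqrt x = x := Real.mul_self_sqrt hx.le
  rw [qTheta, hP, qA_step h0 h1 x]
  have : Real.sqrt x - (Real.sqrt x)⁻¹ = -(Real.sqrt x)⁻¹ * (1 - x) := by
    field_simp
    linarith
  rw [this]
  ring

lemma qTheta_shift {q : ℝ} (h0 : 0 < q) (h1 : q < 1) {x : ℝ} (hx : 0 < x) :
    qTheta q (x * q) = -(Real.sqrt q)⁻¹ * x⁻¹ * qTheta q x := by
  rw [qTheta_eq h0 h1 hx, qTheta_eq h0 h1 (mul_pos hx h0), Real.sqrt_mul hx.le, qA_step h0 h1 x]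
  have e : (x * q)⁻¹ * q = x⁻¹ := by field_simp
  rw [e, qA_step h0 h1 x⁻¹]
  have hs : 0 < Real.sqrt x := Real.sqrt_pos.2 hx
  have hs : 0 < Real.sqrt q := Real.sqrt_pos.2 h0
  field_simp
  ring

lemma fTheta_shift {q : ℝ} (h0 : 0 < q) (h1 : q < 1) {z a : ℝ} (hz : 0 < z) (ha : 0 < a) :
    fTheta q z (a * q) = z⁻¹ * fTheta q z a := by
  unfold fTheta
  rw [show a * q * z = a * z * q by ring, qTheta_shift h0 h1 (mul_pos ha hz),
    qTheta_shift h0 h1 ha]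
  have hs : 0 < Real.sqrt q := Real.sqrt_pos.2 h0
  have hc : -(Real.sqrt q)⁻¹ * a⁻¹ ≠ 0 := by
    have : 0 < (Real.sqrt q)⁻¹ * a⁻¹ := by positivity
    linarith
  rw [show -(Real.sqrt q)⁻¹ * (a * z)⁻¹ * qTheta q (a * z)
    = (-(Real.sqrt q)⁻¹ * a⁻¹) * (z⁻¹ * qTheta q (a * z)) by rw [mul_inv]; ring,
    mul_assoc (-(Real.sqrt q)⁻¹ * a⁻¹), mul_div_mul_left _ _ hc, mul_div_assoc]

lemma fTheta_zshift {q : ℝ} (h0 : 0 < q) (h1 : q < 1) {z a : ℝ} (hz : 0 < z) (ha : 0 < a)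
    (n : ℤ) : fTheta q z (a * q ^ n) = z ^ (-n) * fTheta q z a := by
  induction n using Int.induction_on with
  | zero => simp
  | succ k ih =>
    rw [zpow_add_one₀ h0.ne', ← mul_assoc, fTheta_shift h0 h1 hz (by positivity), ih,
      ← mul_assoc, neg_add, zpow_add₀ hz.ne', zpow_neg_one, mul_comm z⁻¹]
  | pred k ih =>
    have h := fTheta_shift h0 h1 hz (a := a * q ^ (-(k:ℤ) - 1)) (by positivity)
    rw [mul_assoc, ← zpow_add_one₀ h0.ne', sub_add_cancel, ih] at h
    rw [show -(-(k:ℤ) - 1) = - -(k:ℤ) + 1 by ring, zpow_add_one₀ hz.ne', mul_comm _ z, mul_assoc, h,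
      mul_inv_cancel_left₀ hz.ne']

lemma qA_tendsto {u : ℝ → ℝ} (hu : Tendsto u (𝓝[Set.Ioo (0:ℝ) 1] 0) (𝓝 0)) :
    Tendsto (fun q => qA q (u q)) (𝓝[Set.Ioo (0:ℝ) 1] 0) (𝓝 1) := by
  rw [tendsto_iff_norm_sub_tendsto_zero]
  have hq : Tendsto (fun q : ℝ => q) (𝓝[Set.Ioo (0:ℝ) 1] 0) (𝓝 0) := nhdsWithin_le_nhds
  have hb : Tendsto (fun q => Real.exp (‖u q‖ * (1 - q)⁻¹) - 1) (𝓝[Set.Ioo (0:ℝ) 1] 0) (𝓝 0) := by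
    have h1 : Tendsto (fun q : ℝ => (1 - q)⁻¹) (𝓝[Set.Ioo (0:ℝ) 1] 0) (𝓝 (1 - 0)⁻¹) :=
      (tendsto_const_nhds.sub hq).inv₀ (by norm_num)
    have h2 := ((Real.continuous_exp.tendsto _).comp (hu.norm.mul h1)).sub_const 1
    simpa using h2
  refine squeeze_zero' (Eventually.of_forall fun q => norm_nonneg _) ?_ hb
  filter_upwards [self_mem_nhdsWithin] with q hq
  have h : ‖qA q (u q) - 1‖ ≤ Real.exp (∑' i : ℕ, ‖-(u q * q ^ i)‖) - 1 := by
    have hp := (qA_multipliable hq.1 hq.2 (u q)).hasProd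
    refine le_of_tendsto ((Tendsto.sub_const hp 1).norm) (Eventually.of_forall fun T => ?_)
    refine (T.norm_prod_one_add_sub_one_le _).trans ?_
    have := (qA_summable hq.1 hq.2 (u q)).sum_le_tsum T (fun i _ => norm_nonneg _)
    have := Real.exp_le_exp.2 this
    linarith
  have e : ∑' i : ℕ, ‖-(u q * q ^ i)‖ = ‖u q‖ * (1 - q)⁻¹ := by
    simp only [norm_neg, norm_mul, norm_pow, tsum_mul_left, Real.norm_of_nonneg hq.1.le]
    rw [tsum_geometric_of_lt_one hq.1.le hq.2]
  rw [e] at h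
  exact h

lemma rpow_tendsto {t : ℝ} (ht : 0 < t) :
    Tendsto (fun q : ℝ => q ^ t) (𝓝[Set.Ioo (0:ℝ) 1] 0) (𝓝 0) := by
  have := (Real.continuousAt_rpow_const 0 t (Or.inr ht.le)).tendsto
  rw [Real.zero_rpow ht.ne'] at this
  exact this.mono_left nhdsWithin_le_nhds

/-- For non-integer real `s` and reals `a, z > 0` with `z ≠ 1`,
`f_q(z, a q^s) → z^{-⌊s⌋} / (z - 1)` as `q → 0⁺`, with `q` ranging over `(0,1)`. -/
theorem fTheta_limit_nonintegral_kahler (s : ℝ) (hs : ∀ k : ℤ, s ≠ (k : ℝ))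
    (a z : ℝ) (ha : 0 < a) (hz : 0 < z) (hz1 : z ≠ 1) :
    Tendsto (fun q : ℝ => fTheta q z (a * q ^ s))
      (𝓝[Set.Ioo (0:ℝ) 1] 0) (𝓝 (z ^ (-⌊s⌋) / (z - 1))) := by
  obtain ⟨t, htd⟩ : ∃ t, t = Int.fract s := ⟨_, rfl⟩
  have ht1 : t < 1 := htd ▸ Int.fract_lt_one s
  have ht0 : 0 < t := by
    refine lt_of_le_of_ne (htd ▸ Int.fract_nonneg s) fun h => hs ⌊s⌋ ?_
    have := Int.floor_add_fract s
    rw [← htd, ← h] at this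
    linarith
  have hst : s = t + (⌊s⌋ : ℤ) := by
    have := Int.floor_add_fract s
    rw [← htd] at this
    linarith
  have hr := rpow_tendsto ht0
  have hr1 := rpow_tendsto (sub_pos.2 ht1)
  have hq : Tendsto (fun q : ℝ => q) (𝓝[Set.Ioo (0:ℝ) 1] 0) (𝓝 0) := nhdsWithin_le_nhds
  have c (k : ℝ) {u : ℝ → ℝ} (hu : Tendsto u (𝓝[Set.Ioo (0:ℝ) 1] 0) (𝓝 0)) :
      Tendsto (fun q => qA q (k * u q)) (𝓝[Set.Ioo (0:ℝ) 1] 0) (𝓝 1) :=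
    qA_tendsto (by simpa using hu.const_mul k)
  have hz1' : 1 - z ≠ 0 := sub_ne_zero.2 hz1.symm
  have lim := ((((c (a * z) hr).mul (c (a * z)⁻¹ hr1)).neg).div
    (((c a hr).mul (c a⁻¹ hr1)).mul (((c z hq).mul (c z⁻¹ hq)).const_mul (1 - z)))
    (by simpa using hz1')).const_mul (z ^ (-⌊s⌋))
  have e : z ^ (-⌊s⌋) * (-(1 * 1) / (1 * 1 * ((1 - z) * (1 * 1)))) = z ^ (-⌊s⌋) / (z - 1) := by
    have : z - 1 ≠ 0 := sub_ne_zero.2 hz1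
    rw [div_eq_mul_inv _ (z - 1)]
    congr 1
    rw [← neg_sub z 1]
    field_simp
  rw [e] at lim
  refine lim.congr' ?_
  filter_upwards [self_mem_nhdsWithin] with q hq
  obtain ⟨h0, h1⟩ := hq
  have hqt : 0 < q ^ t := Real.rpow_pos_of_pos h0 t
  have hqs : q ^ s = q ^ t * q ^ ⌊s⌋ := by
    conv_lhs => rw [hst]
    rw [Real.rpow_add h0, Real.rpow_intCast]
  have hq1 : q ^ (1 - t) = (q ^ t)⁻¹ * q := by
    rw [Real.rpow_sub h0, Real.rpow_one]
    field_simp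
  rw [hqs, ← mul_assoc, fTheta_zshift h0 h1 hz (mul_pos ha hqt), fTheta]
  congr 1
  obtain ⟨b, hbd⟩ : ∃ b, b = q ^ t := ⟨_, rfl⟩
  simp only [Pi.div_apply]
  rw [hq1]
  rw [← hbd] at hqt ⊢
  rw [qTheta_eq h0 h1 (x := a * b * z) (by positivity), qTheta_eq h0 h1 (x := a * b) (by positivity),
    qTheta_eq h0 h1 hz, Real.sqrt_mul (by positivity) z, qA_step h0 h1 z]
  have hs1 : 0 < Real.sqrt z := Real.sqrt_pos.2 hz
  have hs2 : 0 < Real.sqrt (a * b) := Real.sqrt_pos.2 (by positivity)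
  have i1 : (a * z)⁻¹ * (b⁻¹ * q) = (a * b * z)⁻¹ * q := by field_simp
  have i2 : a⁻¹ * (b⁻¹ * q) = (a * b)⁻¹ * q := by field_simp
  have i3 : a * z * b = a * b * z := by ring
  rw [i1, i2, i3]
  generalize qA q (a * b * z) = A1
  generalize qA q ((a * b * z)⁻¹ * q) = A2
  generalize qA q (a * b) = A3
  generalize qA q ((a * b)⁻¹ * q) = A4
  generalize qA q (z * q) = A5
  generalize qA q (z⁻¹ * q) = A6
  generalize Real.sqrt (a * b) = r at *
  generalize Real.sqrt z = w at *
  have hc : (r * w)⁻¹ ≠ 0 := by positivity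
  rw [show -(r * w)⁻¹ * (A1 * A2) = (r * w)⁻¹ * (-(A1 * A2)) by ring,
    show -r⁻¹ * (A3 * A4) * (-w⁻¹ * ((1 - z) * A5 * A6))
      = (r * w)⁻¹ * (A3 * A4 * ((1 - z) * (A5 * A6))) by rw [mul_inv]; ring,
    mul_div_mul_left _ _ hc]
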